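/- Let n > 3 and let (P, ·, {-,-}) be an n-dimensional complex Poisson algebra such that the commutative associative algebra (P,·) is filiform. Then (P, ·, {-,-}) is isomorphic to exactly one of the following five Poisson algebras, given on a basis e₁,…,eₙ with e_i·e_j = e_{i+j} for 2 ≤ i+j ≤ n−1 (i,j ≤ n−1) and all unlisted products zero or determined by (anti)commutativity: P₁,₁ⁿ (no further products); P₁,₂ⁿ: additionally {e₁,eₙ} = eₙ; P₁,₃ⁿ: additionally {e₁,eₙ} = e_{n−1}; P₁,₄ⁿ: additionally eₙ·eₙ = e_{n−1}; P₁,₅ⁿ: additionally eₙ·eₙ = e_{n−1} and {e₁,eₙ} = e_{n−1}. -/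

import Mathlib

open scoped BigOperators

/-- The bilinear map on `Fin n → ℂ` determined by structure constants `c`. -/
noncomputable def sb {n : ℕ} (c : Fin n → Fin n → Fin n → ℂ) :
    (Fin n → ℂ) →ₗ[ℂ] (Fin n → ℂ) →ₗ[ℂ] (Fin n → ℂ) :=
  LinearMap.mk₂ ℂ (fun x y k => ∑ a, ∑ b, c a b k * (x a * y b))
    (fun x x' y => by
      funext k
      simp [add_mul, mul_add, Finset.sum_add_distrib])
    (fun r x y => by
      funext k
      simp only [Pi.smul_apply, smul_eq_mul, Finset.mul_sum]
      exact Finset.sum_congr rfl fun a _ => Finset.sum_congr rfl fun b _ => by ring)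
    (fun x y y' => by
      funext k
      simp [mul_add, Finset.sum_add_distrib])
    (fun r x y => by
      funext k
      simp only [Pi.smul_apply, smul_eq_mul, Finset.mul_sum]
      exact Finset.sum_congr rfl fun a _ => Finset.sum_congr rfl fun b _ => by ring)

/-- `apow m i` is the `i`-th power `P^i` of the algebra `(P, m)`:
`P^1 = P` and `P^(k+1) = span { m a c : a ∈ P^k, c ∈ P }`. -/
noncomputable def apow {P : Type*} [AddCommGroup P] [Module ℂ P]
    (m : P →ₗ[ℂ] P →ₗ[ℂ] P) : ℕ → Submodule ℂ P
  | 0 => ⊤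
  | 1 => ⊤
  | k + 2 => Submodule.span ℂ {z : P | ∃ a, a ∈ apow m (k + 1) ∧ ∃ c : P, z = m a c}

/-- Multiplication of `μ₁,₁ⁿ` / `P₁,₁ⁿ`–`P₁,₃ⁿ`. -/
noncomputable def mu11 (n : ℕ) : (Fin n → ℂ) →ₗ[ℂ] (Fin n → ℂ) →ₗ[ℂ] (Fin n → ℂ) :=
  sb (fun a b k => if (a : ℕ) + (b : ℕ) + 1 = (k : ℕ) ∧ (k : ℕ) + 2 ≤ n then 1 else 0)

/-- Multiplication of `μ₁,₂ⁿ` / `P₁,₄ⁿ`, `P₁,₅ⁿ` (additionally `eₙ·eₙ = e_{n−1}`). -/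
noncomputable def mu12 (n : ℕ) : (Fin n → ℂ) →ₗ[ℂ] (Fin n → ℂ) →ₗ[ℂ] (Fin n → ℂ) :=
  sb (fun a b k =>
    (if (a : ℕ) + (b : ℕ) + 1 = (k : ℕ) ∧ (k : ℕ) + 2 ≤ n then 1 else 0) +
    (if (a : ℕ) + 1 = n ∧ (b : ℕ) + 1 = n ∧ (k : ℕ) + 2 = n then 1 else 0))

/-- The bracket `{e₁,eₙ} = eₙ` of `P₁,₂ⁿ`. -/
noncomputable def brA (n : ℕ) : (Fin n → ℂ) →ₗ[ℂ] (Fin n → ℂ) →ₗ[ℂ] (Fin n → ℂ) :=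
  sb (fun a b k =>
    if (a : ℕ) = 0 ∧ (b : ℕ) + 1 = n ∧ (k : ℕ) + 1 = n then 1
    else if (a : ℕ) + 1 = n ∧ (b : ℕ) = 0 ∧ (k : ℕ) + 1 = n then -1 else 0)

/-- The bracket `{e₁,eₙ} = e_{n−1}` of `P₁,₃ⁿ` and `P₁,₅ⁿ`. -/
noncomputable def brB (n : ℕ) : (Fin n → ℂ) →ₗ[ℂ] (Fin n → ℂ) →ₗ[ℂ] (Fin n → ℂ) :=
  sb (fun a b k =>
    if (a : ℕ) = 0 ∧ (b : ℕ) + 1 = n ∧ (k : ℕ) + 2 = n then 1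
    else if (a : ℕ) + 1 = n ∧ (b : ℕ) = 0 ∧ (k : ℕ) + 2 = n then -1 else 0)

/-- Isomorphism of the double algebra `(P, m, b)` with the double algebra on
`Fin n → ℂ` given by `(m', b')`. -/
def IsoPn (n : ℕ) (P : Type*) [AddCommGroup P] [Module ℂ P]
    (m b : P →ₗ[ℂ] P →ₗ[ℂ] P)
    (m' b' : (Fin n → ℂ) →ₗ[ℂ] (Fin n → ℂ) →ₗ[ℂ] (Fin n → ℂ)) : Prop :=
  ∃ φ : P ≃ₗ[ℂ] (Fin n → ℂ),
    (∀ x y, φ (m x y) = m' (φ x) (φ y)) ∧ (∀ x y, φ (b x y) = b' (φ x) (φ y))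

section aux

variable {P : Type*} [AddCommGroup P] [Module ℂ P]

/-- `pw m u k` is the power `u^(k+1)`. -/
noncomputable def pw (m : P →ₗ[ℂ] P →ₗ[ℂ] P) (u : P) : ℕ → P
  | 0 => u
  | k + 1 => m u (pw m u k)

theorem apow_mul (m : P →ₗ[ℂ] P →ₗ[ℂ] P) (k : ℕ) (a c : P) (ha : a ∈ apow m (k + 1)) :
    m a c ∈ apow m (k + 2) := by
  rw [apow]
  exact Submodule.subset_span ⟨a, ha, c, rfl⟩

theorem apow_le (m : P →ₗ[ℂ] P →ₗ[ℂ] P) (k : ℕ) : apow m (k + 1) ≤ apow m k := by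
  induction k with
  | zero => simp [apow]
  | succ k ih =>
    cases k with
    | zero => simp [apow]
    | succ k =>
      conv_lhs => rw [apow]
      rw [Submodule.span_le]
      rintro z ⟨a, ha, c, rfl⟩
      exact apow_mul m k a c (ih ha)

theorem apow_anti (m : P →ₗ[ℂ] P →ₗ[ℂ] P) : Antitone (apow m) :=
  antitone_nat_of_succ_le (apow_le m)

variable {m br : P →ₗ[ℂ] P →ₗ[ℂ] P}

theorem pw_mem (hcomm : ∀ x y, m x y = m y x) (u : P) (k : ℕ) : pw m u k ∈ apow m (k + 1) := by
  induction k with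
  | zero => simp [apow]
  | succ k ih =>
    rw [pw, hcomm]
    exact apow_mul m k _ _ ih

theorem pw_mul_pw (hassoc : ∀ x y z, m (m x y) z = m x (m y z)) (u : P) (i j : ℕ) :
    m (pw m u i) (pw m u j) = pw m u (i + j + 1) := by
  induction i with
  | zero => simp [pw]
  | succ i ih =>
    rw [pw, hassoc, ih, show i + 1 + j + 1 = (i + j + 1) + 1 by ring]
    rfl

theorem pw_mul_mem (hcomm : ∀ x y, m x y = m y x)
    (hassoc : ∀ x y z, m (m x y) z = m x (m y z)) (u : P) (k j : ℕ) (a : P)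
    (ha : a ∈ apow m (j + 1)) : m (pw m u k) a ∈ apow m (j + k + 2) := by
  induction k with
  | zero =>
    rw [pw, hcomm]
    exact apow_mul m j _ _ ha
  | succ k ih =>
    rw [pw, hassoc, hcomm]
    exact apow_mul m (j + k + 1) _ _ ih

theorem step (hcomm : ∀ x y, m x y = m y x)
    (hassoc : ∀ x y z, m (m x y) z = m x (m y z)) (u : P)
    (h0 : apow m 2 ≤ Submodule.span ℂ {pw m u 1} ⊔ apow m 3) (k : ℕ) :
    apow m (k + 2) ≤ Submodule.span ℂ {pw m u (k + 1)} ⊔ apow m (k + 3) := by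
  induction k with
  | zero => exact h0
  | succ k ih =>
    conv_lhs => rw [apow]
    rw [Submodule.span_le]
    rintro z ⟨a, ha, v, rfl⟩
    obtain ⟨p, hp, a', ha', rfl⟩ := Submodule.mem_sup.1 (ih ha)
    obtain ⟨c, rfl⟩ := Submodule.mem_span_singleton.1 hp
    have huv : m u v ∈ apow m 2 := apow_mul m 0 _ _ (by simp [apow])
    obtain ⟨p, hp, a3, ha3, he⟩ := Submodule.mem_sup.1 (h0 huv)
    obtain ⟨d, rfl⟩ := Submodule.mem_span_singleton.1 hp
    have e1 : m (pw m u (k + 1)) v = d • pw m u (k + 2) + m (pw m u k) a3 := by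
      rw [pw, hcomm u, hassoc, ← he, map_add, map_smul, pw_mul_pw hassoc]
    rw [map_add, map_smul, LinearMap.add_apply, LinearMap.smul_apply, e1]
    have h4 := pw_mul_mem hcomm hassoc u k 2 a3 ha3
    have h5 := apow_mul m (k + 2) a' v ha'
    rw [show 2 + k + 2 = k + 4 by ring] at h4
    refine Submodule.add_mem _ (Submodule.smul_mem _ _ (Submodule.add_mem _ ?_ ?_)) ?_
    · exact Submodule.smul_mem _ _ (Submodule.mem_sup_left (Submodule.mem_span_singleton_self _))
    · exact Submodule.mem_sup_right h4
    · exact Submodule.mem_sup_right h5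

/-- The normal form data. -/
structure NF (n : ℕ) (m br : P →ₗ[ℂ] P →ₗ[ℂ] P) (u y : P) (α β γ : ℂ) : Prop where
  top : ⊤ ≤ Submodule.span ℂ (Set.range (pw m u) ∪ {y})
  van : ∀ k, n ≤ k + 1 → pw m u k = 0
  uy : m u y = 0
  yy : m y y = α • pw m u (n - 2)
  buy : br u y = β • pw m u (n - 2) + γ • y

/-- The candidate basis. -/
noncomputable def bv (n : ℕ) (m : P →ₗ[ℂ] P →ₗ[ℂ] P) (u y : P) (i : Fin n) : P :=
  if (i : ℕ) + 1 < n then pw m u i else y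

theorem span_bv {n : ℕ} (hn : 0 < n) (u y : P)
    (top : ⊤ ≤ Submodule.span ℂ (Set.range (pw m u) ∪ {y}))
    (van : ∀ k, n ≤ k + 1 → pw m u k = 0) :
    ⊤ ≤ Submodule.span ℂ (Set.range (bv n m u y)) := by
  refine top.trans ?_
  rw [Submodule.span_le]
  rintro z (⟨k, rfl⟩ | rfl)
  · by_cases hk : k + 1 < n
    · exact Submodule.subset_span ⟨⟨k, by omega⟩, by simp [bv, hk]⟩
    · rw [van k (by omega)]; exact Submodule.zero_mem _
  · refine Submodule.subset_span ⟨⟨n - 1, by omega⟩, ?_⟩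
    have : ¬ (n - 1 + 1 < n) := by omega
    simp [bv, this]

theorem exists_basis {n : ℕ} (hn : 0 < n) (hdim : Module.finrank ℂ P = n) (u y : P)
    (top : ⊤ ≤ Submodule.span ℂ (Set.range (pw m u) ∪ {y}))
    (van : ∀ k, n ≤ k + 1 → pw m u k = 0) :
    ∃ b : Module.Basis (Fin n) ℂ P, ⇑b = bv n m u y :=
  ⟨basisOfTopLeSpanOfCardEqFinrank _ (span_bv hn u y top van) (by simp [hdim]),
    coe_basisOfTopLeSpanOfCardEqFinrank _ _ _⟩

theorem NF.scale {n : ℕ} (hn : 3 < n) {u y : P} {α β γ : ℂ} (h : NF n m br u y α β γ)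
    (s t α' β' γ' : ℂ) (hs : s ≠ 0) (ht : t ≠ 0)
    (h1 : t ^ 2 * α = α' * s ^ (n - 1)) (h2 : s * t * β = β' * s ^ (n - 1))
    (h3 : s * γ = γ') :
    NF n m br (s • u) (t • y) α' β' γ' := by
  have hp : ∀ k, pw m (s • u) k = s ^ (k + 1) • pw m u k := by
    intro k
    induction k with
    | zero => simp [pw]
    | succ k ih =>
      simp only [pw, ih, map_smul, LinearMap.smul_apply, smul_smul]
      congr 1
  have hn2 : n - 2 + 1 = n - 1 := by omega
  refine ⟨h.top.trans ?_, ?_, ?_, ?_, ?_⟩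
  · rw [Submodule.span_le]
    rintro z (⟨k, rfl⟩ | rfl)
    · have : pw m u k = (s ^ (k + 1))⁻¹ • pw m (s • u) k := by
        rw [hp, smul_smul, inv_mul_cancel₀ (pow_ne_zero _ hs), one_smul]
      rw [this]
      exact Submodule.smul_mem _ _ (Submodule.subset_span (Or.inl ⟨k, rfl⟩))
    · have : z = t⁻¹ • (t • z) := by
        rw [smul_smul, inv_mul_cancel₀ ht, one_smul]
      rw [this]
      refine Submodule.smul_mem _ _ (Submodule.subset_span (Or.inr ?_))
      rw [← this]
      rfl
  · intro k hk
    rw [hp, h.van k hk, smul_zero]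
  · simp [h.uy]
  · rw [hp, hn2, smul_smul, ← h1]
    simp only [map_smul, LinearMap.smul_apply, h.yy, smul_smul]
    congr 1
    ring
  · rw [hp, hn2, smul_smul, ← h2, ← h3]
    simp only [map_smul, LinearMap.smul_apply, h.buy, smul_smul, smul_add]
    congr 2 <;> ring

theorem NF.shift {n : ℕ} (hn : 3 < n) (hcomm : ∀ x y, m x y = m y x)
    (hassoc : ∀ x y z, m (m x y) z = m x (m y z)) {u y : P} {β γ : ℂ}
    (hbu : ∀ k, br u (pw m u k) = 0)
    (h : NF n m br u y 0 β γ) (hγ : γ ≠ 0) :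
    NF n m br u (y + (β / γ) • pw m u (n - 2)) 0 0 γ := by
  have hu : m u (pw m u (n - 2)) = 0 := h.van (n - 2 + 1) (by omega)
  have hy : ∀ k, m (pw m u k) y = 0 := by
    intro k
    induction k with
    | zero => exact h.uy
    | succ k ih => rw [pw, hassoc, ih, map_zero]
  refine ⟨h.top.trans ?_, h.van, ?_, ?_, ?_⟩
  · rw [Submodule.span_le]
    rintro z (⟨k, rfl⟩ | rfl)
    · exact Submodule.subset_span (Or.inl ⟨k, rfl⟩)
    · have : z = (z + (β / γ) • pw m u (n - 2)) - (β / γ) • pw m u (n - 2) := by abel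
      rw [this]
      refine Submodule.sub_mem _ (Submodule.subset_span (Or.inr ?_))
        (Submodule.smul_mem _ _ (Submodule.subset_span (Or.inl ⟨_, rfl⟩)))
      rw [← this]
      rfl
  · simp [h.uy, hu]
  · simp [h.yy, hy, hcomm y, pw_mul_pw hassoc, h.van (n - 2 + (n - 2) + 1) (by omega)]
  · rw [map_add, map_smul, hbu, h.buy, smul_zero, add_zero, zero_smul, zero_add, smul_add,
      smul_smul, mul_div_cancel₀ _ hγ, add_comm]

theorem sb_basis {n : ℕ} (b : Module.Basis (Fin n) ℂ P) (c : Fin n → Fin n → Fin n → ℂ)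
    (h : ∀ i j, m (b i) (b j) = ∑ k, c i j k • b k) (x y : P) :
    b.equivFun (m x y) = sb c (b.equivFun x) (b.equivFun y) := by
  have : m.compr₂ (b.equivFun : P →ₗ[ℂ] (Fin n → ℂ)) =
      (sb c).compl₁₂ (b.equivFun : P →ₗ[ℂ] (Fin n → ℂ)) (b.equivFun : P →ₗ[ℂ] (Fin n → ℂ)) := by
    refine b.ext fun i => b.ext fun j => ?_
    funext k
    simp [h, sb, Finsupp.single_apply]
  exact LinearMap.congr_fun (LinearMap.congr_fun this x) y

theorem br_self (hanti : ∀ x y, br x y = - br y x) (x : P) : br x x = 0 := by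
  have h : (2 : ℂ) • br x x = 0 := by
    rw [two_smul]
    exact eq_neg_iff_add_eq_zero.1 (hanti x x)
  exact (smul_eq_zero.1 h).resolve_left two_ne_zero

theorem br_pw_u (hanti : ∀ x y, br x y = - br y x)
    (hleib : ∀ x y z, br (m x y) z = m (br x z) y + m x (br y z)) (u : P) (k : ℕ) : br (pw m u k) u = 0 := by
  induction k with
  | zero => exact br_self hanti u
  | succ k ih => rw [pw, hleib, ih, br_self hanti]; simp

theorem br_pw_pw (hanti : ∀ x y, br x y = - br y x)
    (hleib : ∀ x y z, br (m x y) z = m (br x z) y + m x (br y z)) (u : P) (i j : ℕ) : br (pw m u i) (pw m u j) = 0 := by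
  have h0 : br u (pw m u j) = 0 := by rw [hanti, br_pw_u hanti hleib, neg_zero]
  induction i with
  | zero => exact h0
  | succ k ih => rw [pw, hleib, ih, h0]; simp

theorem ann_u {n : ℕ} (hn : 3 < n) (hdim : Module.finrank ℂ P = n) (u y : P)
    (top : ⊤ ≤ Submodule.span ℂ (Set.range (pw m u) ∪ {y}))
    (van : ∀ k, n ≤ k + 1 → pw m u k = 0) (huy : m u y = 0) (x : P) (hx : m u x = 0) :
    ∃ c d : ℂ, x = c • pw m u (n - 2) + d • y := by
  obtain ⟨b, hb⟩ := exists_basis (by omega) hdim u y top van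
  obtain ⟨N, rfl⟩ : ∃ N, n = N + 2 := ⟨n - 2, by omega⟩
  have e1 : ∀ i : Fin N, b i.castSucc.castSucc = pw m u i := by
    intro i
    have := i.2
    rw [hb]; simp [bv]
  have e2 : b (Fin.last N).castSucc = pw m u N := by
    rw [hb]; simp [bv]
  have e3 : b (Fin.last (N + 1)) = y := by
    rw [hb]; simp [bv]
  have e4 : ∀ i : Fin N, pw m u (i + 1) = b i.succ.castSucc := by
    intro i
    have := i.2
    rw [hb]; simp [bv]
  have hsum := b.sum_repr x
  rw [Fin.sum_univ_castSucc, Fin.sum_univ_castSucc, e2, e3] at hsum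
  simp only [e1] at hsum
  refine ⟨b.repr x (Fin.last N).castSucc, b.repr x (Fin.last (N + 1)), ?_⟩
  have hN : m u (pw m u N) = 0 := van (N + 1) (by omega)
  have h0 : ∑ i : Fin N, b.repr x i.castSucc.castSucc • b i.succ.castSucc = 0 := by
    rw [← hx]
    conv_rhs => rw [← hsum]
    simp only [map_add, map_sum, map_smul, huy, hN, smul_zero, add_zero]
    refine Finset.sum_congr rfl fun i _ => ?_
    rw [← e4]; rfl
  have hli : LinearIndependent ℂ (fun i : Fin N => b i.succ.castSucc) :=
    b.linearIndependent.comp (fun i : Fin N => i.succ.castSucc)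
      (fun i j h => by simpa using h)
  have hz := Fintype.linearIndependent_iff.1 hli _ h0
  conv_lhs => rw [← hsum]
  simp [hz]

theorem exists_NF {n : ℕ} (hn : 3 < n)
    (hcomm : ∀ x y, m x y = m y x)
    (hassoc : ∀ x y z, m (m x y) z = m x (m y z))
    (hanti : ∀ x y, br x y = - br y x)
    (hleib : ∀ x y z, br (m x y) z = m (br x z) y + m x (br y z))
    (hdim : Module.finrank ℂ P = n)
    (hfil : ∀ i : ℕ, 2 ≤ i → i ≤ n → Module.finrank ℂ ↥(apow m i) = n - i) :
    ∃ u y : P, ∃ α β γ : ℂ, NF n m br u y α β γ ∧ α * γ = 0 := by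
  have : FiniteDimensional ℂ P := Module.finite_of_finrank_pos (by omega)
  have f2 := hfil 2 le_rfl (by omega)
  have f3 := hfil 3 (by omega) (by omega)
  have fn : apow m n = ⊥ := by
    have := hfil n (by omega) le_rfl
    rw [Nat.sub_self] at this
    exact Submodule.finrank_eq_zero.1 this
  obtain ⟨u, hu⟩ : ∃ u, m u u ∉ apow m 3 := by
    by_contra! hall
    have hle : apow m 2 ≤ apow m 3 := by
      conv_lhs => rw [apow]
      rw [Submodule.span_le]
      rintro z ⟨a, -, c, rfl⟩
      have : m a c = (2⁻¹ : ℂ) • (m (a + c) (a + c) - m a a - m c c) := by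
        simp only [map_add, LinearMap.add_apply, hcomm c a]
        rw [eq_inv_smul_iff₀ two_ne_zero, two_smul]
        abel
      rw [this]
      exact Submodule.smul_mem _ _ (Submodule.sub_mem _ (Submodule.sub_mem _ (hall _) (hall _))
        (hall _))
    have := Submodule.finrank_mono hle
    omega
  have hpw1 : pw m u 1 = m u u := rfl
  have h0 : apow m 2 ≤ Submodule.span ℂ {pw m u 1} ⊔ apow m 3 := by
    have hle : Submodule.span ℂ {pw m u 1} ⊔ apow m 3 ≤ apow m 2 := by
      refine sup_le ?_ (apow_le m 2)
      rw [Submodule.span_singleton_le_iff_mem]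
      exact pw_mem hcomm u 1
    have hlt : apow m 3 < Submodule.span ℂ {pw m u 1} ⊔ apow m 3 := by
      refine lt_of_le_of_ne le_sup_right fun h => hu ?_
      rw [h]
      exact Submodule.mem_sup_left (Submodule.mem_span_singleton_self _)
    have := Submodule.finrank_lt_finrank_of_lt hlt
    exact (Submodule.eq_of_le_of_finrank_le hle (by omega)).ge
  have hstep := step hcomm hassoc u h0
  have van : ∀ k, n ≤ k + 1 → pw m u k = 0 := by
    intro k hk
    have := apow_anti m hk (pw_mem hcomm u k)
    rwa [fn, Submodule.mem_bot] at this
  -- the span of the powers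
  obtain ⟨W, hW⟩ : ∃ W, W = Submodule.span ℂ (Set.range fun k : Fin (n - 1) => pw m u k) :=
    ⟨_, rfl⟩
  have hpW : ∀ k, pw m u k ∈ W := by
    intro k
    by_cases hk : k < n - 1
    · rw [hW]
      exact Submodule.subset_span ⟨⟨k, hk⟩, rfl⟩
    · rw [van k (by omega)]; exact W.zero_mem
  have hWfin : Module.finrank ℂ W ≤ n - 1 := by
    rw [hW]
    simpa [Set.finrank] using
      finrank_range_le_card (R := ℂ) (b := fun k : Fin (n - 1) => pw m u k)
  -- the image `u * W` contains `P^2`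
  have hA : ∀ k, apow m 2 ≤ W.map (m u) ⊔ apow m (k + 2) := by
    intro k
    induction k with
    | zero => exact le_sup_right
    | succ k ih =>
      refine ih.trans (sup_le le_sup_left ((hstep k).trans (sup_le ?_ le_sup_right)))
      rw [Submodule.span_singleton_le_iff_mem]
      exact Submodule.mem_sup_left ⟨_, hpW k, rfl⟩
  have hA2 : apow m 2 ≤ W.map (m u) := by
    have := hA (n - 2)
    rwa [show n - 2 + 2 = n by omega, fn, sup_bot_eq] at this
  have hWW : W.map (m u) ≤ W := by
    rw [Submodule.map_le_iff_le_comap]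
    conv_lhs => rw [hW]
    rw [Submodule.span_le]
    rintro z ⟨k, rfl⟩
    exact hpW (k + 1)
  have hA2W := hA2.trans hWW
  have huA : u ∉ apow m 2 := fun h => hu (apow_mul m 1 u u h)
  have hlt : apow m 2 < W :=
    lt_of_le_of_ne hA2W fun h => huA (by rw [h]; exact hpW 0)
  have hltf := Submodule.finrank_lt_finrank_of_lt hlt
  obtain ⟨y0, hy0⟩ : ∃ y0, y0 ∉ W := by
    by_contra! hall
    have : W = ⊤ := Submodule.eq_top_iff'.2 hall
    rw [this, finrank_top] at hWfin
    omega
  have huy0 : m u y0 ∈ apow m 2 := apow_mul m 0 _ _ (by simp [apow])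
  obtain ⟨w, hw, hwe⟩ := hA2 huy0
  obtain ⟨y, hy⟩ : ∃ y, y = y0 - w := ⟨_, rfl⟩
  have hyW : y ∉ W := by
    intro h
    apply hy0
    have := W.add_mem h hw
    rwa [hy, sub_add_cancel] at this
  have huy : m u y = 0 := by rw [hy, map_sub, hwe, sub_self]
  have hlt2 : W < W ⊔ Submodule.span ℂ {y} := by
    refine lt_of_le_of_ne le_sup_left fun h => hyW ?_
    rw [h]
    exact Submodule.mem_sup_right (Submodule.mem_span_singleton_self _)
  have hltf2 := Submodule.finrank_lt_finrank_of_lt hlt2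
  have htop : W ⊔ Submodule.span ℂ {y} = ⊤ :=
    Submodule.eq_top_of_finrank_eq (le_antisymm (Submodule.finrank_le _) (by omega))
  have top : ⊤ ≤ Submodule.span ℂ (Set.range (pw m u) ∪ {y}) := by
    rw [← htop, Submodule.span_union, hW]
    refine sup_le_sup_right (Submodule.span_mono ?_) _
    rintro z ⟨k, rfl⟩
    exact ⟨k, rfl⟩
  have hann := ann_u hn hdim u y top van huy
  obtain ⟨α, d, hyy⟩ := hann (m y y) (by rw [← hassoc, huy]; simp)
  have hd : d = 0 := by
    by_contra hd
    apply hyW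
    have h1 : d • y ∈ W := by
      have : d • y = m y y - α • pw m u (n - 2) := by rw [hyy]; abel
      rw [this]
      exact W.sub_mem (hA2W (apow_mul m 0 _ _ (by simp [apow]))) (W.smul_mem _ (hpW _))
    exact (W.smul_mem_iff hd).1 h1
  rw [hd, zero_smul, add_zero] at hyy
  have hmu : m u (br u y) = 0 := by
    have h1 := hleib u y u
    rw [huy, map_zero, LinearMap.zero_apply, br_self hanti, map_zero, LinearMap.zero_apply,
      zero_add, hanti, map_neg] at h1
    exact neg_eq_zero.1 h1.symm
  obtain ⟨β, γ, hb⟩ := hann (br u y) hmu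
  refine ⟨u, y, α, β, γ, ⟨top, van, huy, hyy, hb⟩, ?_⟩
  have hmy : ∀ k, m (pw m u k) y = 0 := by
    intro k
    induction k with
    | zero => exact huy
    | succ k ih => rw [pw, hassoc, ih, map_zero]
  have h1 := hleib u y y
  rw [huy, map_zero, LinearMap.zero_apply, br_self hanti, map_zero, hb, add_zero, map_add,
    LinearMap.add_apply, map_smul, map_smul, LinearMap.smul_apply, LinearMap.smul_apply, hmy,
    hyy, smul_zero, zero_add, smul_smul] at h1
  obtain ⟨b, hbb⟩ := exists_basis (by omega) hdim u y top van
  have hne : pw m u (n - 2) ≠ 0 := by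
    have : b ⟨n - 2, by omega⟩ = pw m u (n - 2) := by
      have h : n - 2 + 1 < n := by omega
      rw [hbb]; simp [bv, h]
    rw [← this]
    exact b.ne_zero _
  rw [mul_comm]
  exact (smul_eq_zero.1 h1.symm).resolve_right hne

theorem sum_one {n : ℕ} (b : Fin n → P) (c : Fin n → ℂ) (t : Fin n) (r : ℂ)
    (h : ∀ k, c k = if (k : ℕ) = t then r else 0) : ∑ k, c k • b k = r • b t := by
  rw [Finset.sum_eq_single t]
  · rw [h]; simp
  · intro k _ hk
    rw [h, if_neg (fun h => hk (Fin.ext h)), zero_smul]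
  · simp

theorem sum_none {n : ℕ} (b : Fin n → P) (c : Fin n → ℂ)
    (h : ∀ k, c k = 0) : ∑ k, c k • b k = 0 :=
  Finset.sum_eq_zero fun k _ => by rw [h, zero_smul]

section final
variable {n : ℕ} {u y : P} {α β γ : ℂ}

theorem NF.pw_y (h : NF n m br u y α β γ) (hassoc : ∀ x y z, m (m x y) z = m x (m y z))
    (k : ℕ) : m (pw m u k) y = 0 := by
  induction k with
  | zero => exact h.uy
  | succ k ih => rw [pw, hassoc, ih, map_zero]

theorem NF.mul_basis (h : NF n m br u y α β γ) (hn : 3 < n)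
    (hcomm : ∀ x y, m x y = m y x) (hassoc : ∀ x y z, m (m x y) z = m x (m y z))
    (i j : Fin n) : m (bv n m u y i) (bv n m u y j) =
      ∑ k : Fin n, ((if (i : ℕ) + (j : ℕ) + 1 = (k : ℕ) ∧ (k : ℕ) + 2 ≤ n then 1 else 0) +
        (if (i : ℕ) + 1 = n ∧ (j : ℕ) + 1 = n ∧ (k : ℕ) + 2 = n then α else 0)) •
          bv n m u y k := by
  have hi := i.2
  have hj := j.2
  by_cases h1 : (i : ℕ) + 1 < n <;> by_cases h2 : (j : ℕ) + 1 < n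
  · have e : m (bv n m u y i) (bv n m u y j) = pw m u (i + j + 1) := by
      simp only [bv, h1, h2, if_true]
      exact pw_mul_pw hassoc u _ _
    rw [e]
    by_cases h3 : (i : ℕ) + j + 1 + 1 < n
    · rw [sum_one _ _ ⟨i + j + 1, by omega⟩ 1]
      · simp [bv, h3]
      · intro k
        rw [if_neg (by omega : ¬ ((i : ℕ) + 1 = n ∧ (j : ℕ) + 1 = n ∧ (k : ℕ) + 2 = n)), add_zero]
        refine if_congr ?_ rfl rfl
        simp only
        omega
    · rw [h.van _ (by omega), sum_none]
      intro k
      rw [if_neg (by omega), if_neg (by omega), add_zero]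
  · have e : m (bv n m u y i) (bv n m u y j) = 0 := by
      simp only [bv, h1, h2, if_true, if_false]
      exact h.pw_y hassoc _
    rw [e, sum_none]
    intro k
    rw [if_neg (by omega), if_neg (by omega), add_zero]
  · have e : m (bv n m u y i) (bv n m u y j) = 0 := by
      simp only [bv, h1, h2, if_true, if_false]
      rw [hcomm]
      exact h.pw_y hassoc _
    rw [e, sum_none]
    intro k
    rw [if_neg (by omega), if_neg (by omega), add_zero]
  · have e : m (bv n m u y i) (bv n m u y j) = α • pw m u (n - 2) := by
      simp only [bv, h1, h2, if_false]
      exact h.yy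
    rw [e, sum_one _ _ ⟨n - 2, by omega⟩ α]
    · have h3 : n - 2 + 1 < n := by omega
      simp [bv, h3]
    · intro k
      rw [if_neg (by omega), zero_add]
      refine if_congr ?_ rfl rfl
      simp only
      omega

theorem NF.br_pw_y (h : NF n m br u y α β γ) (hn : 3 < n)
    (hcomm : ∀ x y, m x y = m y x) (hassoc : ∀ x y z, m (m x y) z = m x (m y z))
    (hleib : ∀ x y z, br (m x y) z = m (br x z) y + m x (br y z)) (k : ℕ) :
    br (pw m u (k + 1)) y = 0 := by
  have hz : ∀ k, m (br u y) (pw m u k) = 0 := by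
    intro k
    rw [h.buy, map_add, map_smul, map_smul, LinearMap.add_apply, LinearMap.smul_apply,
      LinearMap.smul_apply, hcomm y, h.pw_y hassoc, pw_mul_pw hassoc, h.van _ (by omega)]
    simp
  induction k with
  | zero =>
    have : m u (br u y) = 0 := by rw [hcomm]; exact hz 0
    rw [pw, hleib, hz]
    simp [pw, this]
  | succ k ih => rw [pw, hleib, hz, ih]; simp

theorem NF.br_basis (h : NF n m br u y α β γ) (hn : 3 < n)
    (hcomm : ∀ x y, m x y = m y x) (hassoc : ∀ x y z, m (m x y) z = m x (m y z))
    (hanti : ∀ x y, br x y = - br y x)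
    (hleib : ∀ x y z, br (m x y) z = m (br x z) y + m x (br y z))
    (i j : Fin n) : br (bv n m u y i) (bv n m u y j) =
      if (i : ℕ) = 0 ∧ (j : ℕ) + 1 = n then β • pw m u (n - 2) + γ • y
      else if (i : ℕ) + 1 = n ∧ (j : ℕ) = 0 then -(β • pw m u (n - 2) + γ • y) else 0 := by
  have hi := i.2
  have hj := j.2
  by_cases h1 : (i : ℕ) + 1 < n <;> by_cases h2 : (j : ℕ) + 1 < n
  · rw [if_neg (by omega), if_neg (by omega)]
    simp only [bv, h1, h2, if_true]
    exact br_pw_pw hanti hleib u _ _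
  · simp only [bv, h1, h2, if_true, if_false]
    rcases Nat.eq_zero_or_pos (i : ℕ) with h3 | h3
    · rw [if_pos (by omega), h3]
      exact h.buy
    · rw [if_neg (by omega), if_neg (by omega)]
      obtain ⟨k, hk⟩ : ∃ k, (i : ℕ) = k + 1 := ⟨i - 1, by omega⟩
      rw [hk]
      exact h.br_pw_y hn hcomm hassoc hleib k
  · simp only [bv, h1, h2, if_true, if_false]
    rw [hanti]
    rcases Nat.eq_zero_or_pos (j : ℕ) with h3 | h3
    · rw [if_neg (by omega), if_pos (by omega), h3, ← h.buy]
      rfl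
    · rw [if_neg (by omega), if_neg (by omega)]
      obtain ⟨k, hk⟩ : ∃ k, (j : ℕ) = k + 1 := ⟨j - 1, by omega⟩
      rw [hk, h.br_pw_y hn hcomm hassoc hleib k, neg_zero]
  · rw [if_neg (by omega), if_neg (by omega)]
    simp only [bv, h1, h2, if_false]
    exact br_self hanti y

theorem NF.iso_of (h : NF n m br u y α β γ) (hn : 3 < n) (hdim : Module.finrank ℂ P = n)
    (hcomm : ∀ x y, m x y = m y x) (hassoc : ∀ x y z, m (m x y) z = m x (m y z))
    (hanti : ∀ x y, br x y = - br y x)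
    (hleib : ∀ x y z, br (m x y) z = m (br x z) y + m x (br y z)) :
    (α = 0 → β = 0 → γ = 0 → IsoPn n P m br (mu11 n) 0) ∧
    (α = 0 → β = 0 → γ = 1 → IsoPn n P m br (mu11 n) (brA n)) ∧
    (α = 0 → β = 1 → γ = 0 → IsoPn n P m br (mu11 n) (brB n)) ∧
    (α = 1 → β = 0 → γ = 0 → IsoPn n P m br (mu12 n) 0) ∧
    (α = 1 → β = 1 → γ = 0 → IsoPn n P m br (mu12 n) (brB n)) := by
  obtain ⟨b, hb⟩ := exists_basis (by omega) hdim u y h.top h.van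
  have hm := h.mul_basis hn hcomm hassoc
  have hbr := h.br_basis hn hcomm hassoc hanti hleib
  have hm1 : α = 0 → ∀ x z, b.equivFun (m x z) = mu11 n (b.equivFun x) (b.equivFun z) := by
    rintro rfl
    refine sb_basis b _ fun i j => ?_
    rw [hb, hm]
    simp
  have hm2 : α = 1 → ∀ x z, b.equivFun (m x z) = mu12 n (b.equivFun x) (b.equivFun z) := by
    rintro rfl
    refine sb_basis b _ fun i j => ?_
    rw [hb, hm]
  have hb0 : β = 0 → γ = 0 → ∀ x z, b.equivFun (br x z) =
      (0 : (Fin n → ℂ) →ₗ[ℂ] (Fin n → ℂ) →ₗ[ℂ] (Fin n → ℂ)) (b.equivFun x) (b.equivFun z) := by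
    rintro rfl rfl x z
    have : br = 0 := b.ext fun i => b.ext fun j => by rw [hb, hbr]; simp
    simp [this]
  have hn2 : n - 2 + 1 < n := by omega
  have hn1 : ¬ (n - 1 + 1 < n) := by omega
  have e2 : bv n m u y ⟨n - 2, by omega⟩ = pw m u (n - 2) := by simp [bv, hn2]
  have e1 : bv n m u y ⟨n - 1, by omega⟩ = y := by simp [bv, hn1]
  have hbA : β = 0 → γ = 1 → ∀ x z, b.equivFun (br x z) =
      brA n (b.equivFun x) (b.equivFun z) := by
    rintro rfl rfl
    refine sb_basis b _ fun i j => ?_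
    rw [hb, hbr]
    split_ifs with h1 h2
    · rw [sum_one _ _ ⟨n - 1, by omega⟩ 1, e1]
      · simp
      · intro k
        rw [if_neg (by omega : ¬ ((i : ℕ) + 1 = n ∧ (j : ℕ) = 0 ∧ (k : ℕ) + 1 = n))]
        refine if_congr ?_ rfl rfl
        simp only
        omega
    · rw [sum_one _ _ ⟨n - 1, by omega⟩ (-1), e1]
      · simp
      · intro k
        rw [if_neg (by omega)]
        refine if_congr ?_ rfl rfl
        simp only
        omega
    · rw [sum_none]
      intro k
      rw [if_neg (by omega), if_neg (by omega)]
  have hbB : β = 1 → γ = 0 → ∀ x z, b.equivFun (br x z) =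
      brB n (b.equivFun x) (b.equivFun z) := by
    rintro rfl rfl
    refine sb_basis b _ fun i j => ?_
    rw [hb, hbr]
    split_ifs with h1 h2
    · rw [sum_one _ _ ⟨n - 2, by omega⟩ 1, e2]
      · simp
      · intro k
        rw [if_neg (by omega : ¬ ((i : ℕ) + 1 = n ∧ (j : ℕ) = 0 ∧ (k : ℕ) + 2 = n))]
        refine if_congr ?_ rfl rfl
        simp only
        omega
    · rw [sum_one _ _ ⟨n - 2, by omega⟩ (-1), e2]
      · simp
      · intro k
        rw [if_neg (by omega)]
        refine if_congr ?_ rfl rfl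
        simp only
        omega
    · rw [sum_none]
      intro k
      rw [if_neg (by omega), if_neg (by omega)]
  exact ⟨fun a c d => ⟨b.equivFun, hm1 a, hb0 c d⟩, fun a c d => ⟨b.equivFun, hm1 a, hbA c d⟩,
    fun a c d => ⟨b.equivFun, hm1 a, hbB c d⟩, fun a c d => ⟨b.equivFun, hm2 a, hb0 c d⟩,
    fun a c d => ⟨b.equivFun, hm2 a, hbB c d⟩⟩

theorem NF.classify (h : NF n m br u y α β γ) (hαγ : α * γ = 0)
    (hn : 3 < n) (hdim : Module.finrank ℂ P = n)
    (hcomm : ∀ x y, m x y = m y x) (hassoc : ∀ x y z, m (m x y) z = m x (m y z))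
    (hanti : ∀ x y, br x y = - br y x)
    (hleib : ∀ x y z, br (m x y) z = m (br x z) y + m x (br y z)) :
    IsoPn n P m br (mu11 n) 0 ∨ IsoPn n P m br (mu11 n) (brA n) ∨
    IsoPn n P m br (mu11 n) (brB n) ∨ IsoPn n P m br (mu12 n) 0 ∨
    IsoPn n P m br (mu12 n) (brB n) := by
  have key : ∀ {u y : P} {α β γ : ℂ}, NF n m br u y α β γ → _ := fun h =>
    h.iso_of hn hdim hcomm hassoc hanti hleib
  by_cases hα : α = 0
  · subst hα
    by_cases hγ : γ = 0
    · subst hγ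
      by_cases hβ : β = 0
      · exact Or.inl ((key h).1 rfl hβ rfl)
      · have h' := h.scale hn 1 β⁻¹ 0 1 0 one_ne_zero (inv_ne_zero hβ) (by simp)
          (by simp [inv_mul_cancel₀ hβ]) (by simp)
        exact Or.inr (Or.inr (Or.inl ((key h').2.2.1 rfl rfl rfl)))
    · have h' := h.shift hn hcomm hassoc (fun k => br_pw_pw hanti hleib u 0 k) hγ
      have h'' := h'.scale hn γ⁻¹ 1 0 0 1 (inv_ne_zero hγ) one_ne_zero (by simp) (by simp)
        (inv_mul_cancel₀ hγ)
      exact Or.inr (Or.inl ((key h'').2.1 rfl rfl rfl))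
  · have hγ : γ = 0 := (mul_eq_zero.1 hαγ).resolve_left hα
    subst hγ
    by_cases hβ : β = 0
    · subst hβ
      obtain ⟨t, ht⟩ := IsAlgClosed.exists_pow_nat_eq α⁻¹ (n := 2) (by norm_num)
      have ht0 : t ≠ 0 := by
        rintro rfl
        exact inv_ne_zero hα (by rw [← ht]; simp)
      have h' := h.scale hn 1 t 1 0 0 one_ne_zero ht0 (by simp [ht, inv_mul_cancel₀ hα])
        (by simp) (by simp)
      exact Or.inr (Or.inr (Or.inr (Or.inl ((key h').2.2.2.1 rfl rfl rfl))))
    · obtain ⟨s, hs⟩ := IsAlgClosed.exists_pow_nat_eq (β ^ 2 / α) (n := n - 3) (by omega)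
      have hs0 : s ≠ 0 := by
        rintro rfl
        rw [zero_pow (by omega)] at hs
        exact div_ne_zero (pow_ne_zero 2 hβ) hα hs.symm
      obtain ⟨N, rfl⟩ : ∃ N, n = N + 3 := ⟨n - 3, by omega⟩
      rw [Nat.add_sub_cancel] at hs
      have h' := h.scale hn s (s ^ (N + 1) / β) 1 1 0 hs0
        (div_ne_zero (pow_ne_zero _ hs0) hβ)
        (by
          rw [show N + 3 - 1 = N + 2 by omega]
          have : s ^ (N + 1) * s ^ (N + 1) = s ^ N * s ^ (N + 2) := by ring
          rw [div_pow, sq (s ^ (N + 1)), this, hs]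
          field_simp)
        (by
          rw [show N + 3 - 1 = N + 2 by omega]
          field_simp
          ring) (by simp)
      exact Or.inr (Or.inr (Or.inr (Or.inr ((key h').2.2.2.2 rfl rfl rfl))))

end final

end aux

section invariants

theorem sb_single {n : ℕ} (c : Fin n → Fin n → Fin n → ℂ) (a b k : Fin n) :
    sb c (Pi.single a 1) (Pi.single b 1) k = c a b k := by
  simp [sb, Pi.single_apply]

theorem sb_single_left {n : ℕ} (c : Fin n → Fin n → Fin n → ℂ) (a k : Fin n) (z : Fin n → ℂ) :
    sb c (Pi.single a 1) z k = ∑ b, c a b k * z b := by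
  simp [sb, Pi.single_apply]

/-- Every annihilating element is a product. -/
def AnnProd {P : Type*} [AddCommGroup P] [Module ℂ P] (m : P →ₗ[ℂ] P →ₗ[ℂ] P) : Prop :=
  ∀ z, (∀ x, m x z = 0) → ∃ x y, z = m x y

theorem mu11_not {n : ℕ} (hn : 3 < n) : ¬ AnnProd (mu11 n) := by
  intro h
  obtain ⟨x, y, hxy⟩ := h (Pi.single ⟨n - 1, by omega⟩ 1) (by
    intro x
    funext k
    simp only [mu11, sb, LinearMap.mk₂_apply, Pi.zero_apply]
    refine Finset.sum_eq_zero fun a _ => Finset.sum_eq_zero fun b _ => ?_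
    have hk := k.2
    by_cases hb : (b : ℕ) = n - 1
    · rw [if_neg (by omega), zero_mul]
    · rw [Pi.single_eq_of_ne (fun h => hb (congrArg Fin.val h)), mul_zero, mul_zero])
  have h1 := congrFun hxy ⟨n - 1, by omega⟩
  rw [Pi.single_eq_same] at h1
  apply one_ne_zero (α := ℂ)
  rw [h1]
  simp only [mu11, sb, LinearMap.mk₂_apply]
  refine Finset.sum_eq_zero fun a _ => Finset.sum_eq_zero fun b _ => ?_
  rw [if_neg (by omega), zero_mul]

theorem mu12_ann {n : ℕ} (hn : 3 < n) : AnnProd (mu12 n) := by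
  intro z hz
  have h1 : ∀ b : Fin n, (b : ℕ) + 2 < n → z b = 0 := by
    intro b hb
    have h := congrFun (hz (Pi.single ⟨0, by omega⟩ 1)) ⟨b + 1, by omega⟩
    rw [mu12, sb_single_left, Finset.sum_eq_single b] at h
    · rw [if_pos (by simp only; omega), if_neg (by simp only; omega)] at h
      simpa using h
    · intro j _ hj
      have : (j : ℕ) ≠ b := fun h => hj (Fin.ext h)
      rw [if_neg (by simp only; omega), if_neg (by simp only; omega)]
      simp
    · simp
  have h2 : ∀ b : Fin n, (b : ℕ) + 1 = n → z b = 0 := by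
    intro b hb
    have h := congrFun (hz (Pi.single b 1)) ⟨n - 2, by omega⟩
    rw [mu12, sb_single_left, Finset.sum_eq_single b] at h
    · rw [if_neg (by simp only; omega), if_pos (by simp only; omega)] at h
      simpa using h
    · intro j _ hj
      have : (j : ℕ) ≠ b := fun h => hj (Fin.ext h)
      rw [if_neg (by simp only; omega), if_neg (by simp only; omega)]
      simp
    · simp
  refine ⟨z ⟨n - 2, by omega⟩ • Pi.single ⟨n - 1, by omega⟩ 1, Pi.single ⟨n - 1, by omega⟩ 1, ?_⟩
  funext k
  have hk := k.2
  rw [map_smul, LinearMap.smul_apply, Pi.smul_apply, mu12, sb_single]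
  rw [if_neg (by simp only; omega)]
  by_cases h3 : (k : ℕ) + 2 = n
  · rw [if_pos (by simp only; omega)]
    have : k = ⟨n - 2, by omega⟩ := Fin.ext (by simp only; omega)
    rw [this]
    simp
  · rw [if_neg (by simp only; omega)]
    by_cases h4 : (k : ℕ) + 1 = n
    · rw [h2 k h4]; simp
    · rw [h1 k (by omega)]; simp

theorem brA_not {n : ℕ} (hn : 3 < n) : ¬ ∀ x y z, brA n (brA n x y) z = 0 := by
  intro h
  have e : brA n (Pi.single ⟨0, by omega⟩ 1) (Pi.single ⟨n - 1, by omega⟩ 1) =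
      Pi.single ⟨n - 1, by omega⟩ 1 := by
    funext k
    rw [brA, sb_single, Pi.single_apply]
    simp only [Fin.ext_iff]
    by_cases hk : (k : ℕ) + 1 = n
    · rw [if_pos ⟨trivial, by omega, hk⟩, if_pos (by omega)]
    · rw [if_neg (by omega), if_neg (by omega), if_neg (by omega)]
  have h1 := h (Pi.single ⟨0, by omega⟩ 1) (Pi.single ⟨n - 1, by omega⟩ 1)
    (Pi.single ⟨0, by omega⟩ 1)
  rw [e] at h1
  have h2 := congrFun h1 ⟨n - 1, by omega⟩
  rw [brA, sb_single, if_neg (by simp only; omega),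
    if_pos (by refine ⟨?_, ?_, ?_⟩ <;> first | rfl | (simp only; omega))] at h2
  simp at h2

theorem brB_nil {n : ℕ} (hn : 3 < n) (x y z : Fin n → ℂ) : brB n (brB n x y) z = 0 := by
  have hv : ∀ k : Fin n, (k : ℕ) + 2 ≠ n → brB n x y k = 0 := by
    intro k hk
    simp only [brB, sb, LinearMap.mk₂_apply]
    refine Finset.sum_eq_zero fun a _ => Finset.sum_eq_zero fun b _ => ?_
    rw [if_neg (by omega), if_neg (by omega), zero_mul]
  generalize brB n x y = w at hv
  funext k
  simp only [brB, sb, LinearMap.mk₂_apply, Pi.zero_apply]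
  refine Finset.sum_eq_zero fun a _ => Finset.sum_eq_zero fun b _ => ?_
  by_cases ha : (a : ℕ) + 2 = n
  · rw [if_neg (by omega), if_neg (by omega), zero_mul]
  · rw [hv a ha]; simp

theorem brB_ne {n : ℕ} (hn : 3 < n) : brB n ≠ 0 := by
  intro h
  have h2 := congrFun (LinearMap.congr_fun (LinearMap.congr_fun h (Pi.single ⟨0, by omega⟩ 1))
    (Pi.single ⟨n - 1, by omega⟩ 1)) ⟨n - 2, by omega⟩
  rw [brB, sb_single,
    if_pos (by refine ⟨?_, ?_, ?_⟩ <;> first | rfl | (simp only; omega))] at h2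
  simp at h2

variable {P : Type*} [AddCommGroup P] [Module ℂ P] {n : ℕ} {m br : P →ₗ[ℂ] P →ₗ[ℂ] P}
  {m' b' : (Fin n → ℂ) →ₗ[ℂ] (Fin n → ℂ) →ₗ[ℂ] (Fin n → ℂ)}

theorem iso_ann (h : IsoPn n P m br m' b') : AnnProd m ↔ AnnProd m' := by
  obtain ⟨φ, hm, -⟩ := h
  constructor
  · intro H z hz
    obtain ⟨x, y, hxy⟩ := H (φ.symm z) (fun x => by
      apply φ.injective
      rw [hm, φ.apply_symm_apply, hz, map_zero])
    exact ⟨φ x, φ y, by rw [← hm, ← hxy, φ.apply_symm_apply]⟩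
  · intro H z hz
    obtain ⟨x, y, hxy⟩ := H (φ z) (fun x => by
      rw [← φ.apply_symm_apply x, ← hm, hz, map_zero])
    exact ⟨φ.symm x, φ.symm y, φ.injective (by
      rw [hm, φ.apply_symm_apply, φ.apply_symm_apply, hxy])⟩

theorem iso_zero (h : IsoPn n P m br m' b') : br = 0 ↔ b' = 0 := by
  obtain ⟨φ, -, hb⟩ := h
  constructor
  · intro H
    refine LinearMap.ext fun x => LinearMap.ext fun y => ?_
    rw [← φ.apply_symm_apply x, ← φ.apply_symm_apply y, ← hb, H]
    simp
  · intro H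
    refine LinearMap.ext fun x => LinearMap.ext fun y => φ.injective ?_
    rw [hb, H]
    simp

theorem iso_nil (h : IsoPn n P m br m' b') :
    (∀ x y z, br (br x y) z = 0) ↔ (∀ x y z, b' (b' x y) z = 0) := by
  obtain ⟨φ, -, hb⟩ := h
  constructor
  · intro H x y z
    rw [← φ.apply_symm_apply x, ← φ.apply_symm_apply y, ← φ.apply_symm_apply z, ← hb, ← hb, H,
      map_zero]
  · intro H x y z
    apply φ.injective
    rw [hb, hb, H, map_zero]

end invariants

theorem uniq_five (p1 p2 p3 p4 p5 q1 q2 q3 : Prop) (hc : p1 ∨ p2 ∨ p3 ∨ p4 ∨ p5)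
    (i1 : p1 → ¬ q1 ∧ q2) (i2 : p2 → ¬ q1 ∧ ¬ q2 ∧ ¬ q3) (i3 : p3 → ¬ q1 ∧ ¬ q2 ∧ q3)
    (i4 : p4 → q1 ∧ q2) (i5 : p5 → q1 ∧ ¬ q2) : ∃! j : Fin 5, ![p1, p2, p3, p4, p5] j := by
  have aux : ∀ Q : Fin 5 → Prop, (Q 0 ∨ Q 1 ∨ Q 2 ∨ Q 3 ∨ Q 4) →
      (∀ i j, Q i → Q j → i = j) → ∃! j, Q j := by
    intro Q h hu
    rcases h with h | h | h | h | h <;> exact ⟨_, h, fun j hj => hu _ _ hj h⟩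
  apply aux
  · exact hc
  · intro i j hi hj
    clear aux hc
    fin_cases i <;> fin_cases j <;> simp at hi hj ⊢ <;> grind

/-- For n > 3, an n-dimensional complex Poisson algebra whose associative part
is filiform is isomorphic to exactly one of `P₁,₁ⁿ`, `P₁,₂ⁿ`, `P₁,₃ⁿ`, `P₁,₄ⁿ`,
`P₁,₅ⁿ`. -/
theorem stmt9 (n : ℕ) (hn : 3 < n) (P : Type*) [AddCommGroup P] [Module ℂ P]
    (m br : P →ₗ[ℂ] P →ₗ[ℂ] P)
    (hcomm : ∀ x y, m x y = m y x)
    (hassoc : ∀ x y z, m (m x y) z = m x (m y z))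
    (hanti : ∀ x y, br x y = - br y x)
    (hjac : ∀ x y z, br (br x y) z + br (br y z) x + br (br z x) y = 0)
    (hleib : ∀ x y z, br (m x y) z = m (br x z) y + m x (br y z))
    (hdim : Module.finrank ℂ P = n)
    (hfil : ∀ i : ℕ, 2 ≤ i → i ≤ n → Module.finrank ℂ ↥(apow m i) = n - i) :
    ∃! j : Fin 5,
      ![IsoPn n P m br (mu11 n) 0,
        IsoPn n P m br (mu11 n) (brA n),
        IsoPn n P m br (mu11 n) (brB n),
        IsoPn n P m br (mu12 n) 0,
        IsoPn n P m br (mu12 n) (brB n)] j := by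
  obtain ⟨u, y, α, β, γ, hNF, h0⟩ := exists_NF hn hcomm hassoc hanti hleib hdim hfil
  have hc := hNF.classify h0 hn hdim hcomm hassoc hanti hleib
  have n1 := mu11_not hn
  have n2 := mu12_ann hn
  have n3 := brA_not hn
  have n4 := brB_nil hn
  have n5 := brB_ne hn
  have n6 : brA n ≠ 0 := by
    intro h
    apply n3
    intro x y z
    simp [h]
  have n7 : ∀ x y z, (0 : (Fin n → ℂ) →ₗ[ℂ] (Fin n → ℂ) →ₗ[ℂ] (Fin n → ℂ))
      ((0 : (Fin n → ℂ) →ₗ[ℂ] (Fin n → ℂ) →ₗ[ℂ] (Fin n → ℂ)) x y) z = 0 := by simp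
  have i1 : IsoPn n P m br (mu11 n) 0 → ¬ AnnProd m ∧ br = 0 :=
    fun h => ⟨fun q => n1 ((iso_ann h).1 q), (iso_zero h).2 rfl⟩
  have i2 : IsoPn n P m br (mu11 n) (brA n) →
      ¬ AnnProd m ∧ br ≠ 0 ∧ ¬ ∀ x y z, br (br x y) z = 0 :=
    fun h => ⟨fun q => n1 ((iso_ann h).1 q), fun q => n6 ((iso_zero h).1 q),
      fun q => n3 ((iso_nil h).1 q)⟩
  have i3 : IsoPn n P m br (mu11 n) (brB n) →
      ¬ AnnProd m ∧ br ≠ 0 ∧ ∀ x y z, br (br x y) z = 0 :=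
    fun h => ⟨fun q => n1 ((iso_ann h).1 q), fun q => n5 ((iso_zero h).1 q),
      (iso_nil h).2 n4⟩
  have i4 : IsoPn n P m br (mu12 n) 0 → AnnProd m ∧ br = 0 :=
    fun h => ⟨(iso_ann h).2 n2, (iso_zero h).2 rfl⟩
  have i5 : IsoPn n P m br (mu12 n) (brB n) → AnnProd m ∧ br ≠ 0 :=
    fun h => ⟨(iso_ann h).2 n2, fun q => n5 ((iso_zero h).1 q)⟩
  exact uniq_five _ _ _ _ _ _ _ _ hc i1 i2 i3 i4 i5
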